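/- Let p ≥ K ≥ 1, let S be a p×p real symmetric matrix, let Φ be a p×K real matrix with ΦᵀΦ = I_K, let γ ≥ 0, and let σ² be any real number. Suppose ΦᵀSΦ = V·diag(d₁,…,d_K)·Vᵀ with V a K×K orthogonal matrix and d₁ ≥ … ≥ d_K. Set Λ̂(σ²) = V·diag((d₁ − σ² − γ)₊, …, (d_K − σ² − γ)₊)·Vᵀ. Then (1/2)‖S − ΦΛ̂(σ²)Φᵀ − σ²I_p‖²_F + γ·tr(Λ̂(σ²)) = (1/2)·Σ_{k=1}^{K} ( d_k² − ((d_k − σ² − γ)₊)² ) + (p/2)·σ⁴ − σ²·tr(S) + (1/2)‖S − ΦΦᵀSΦΦᵀ‖²_F. -/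

import Mathlib

open Matrix BigOperators

/-- Squared Frobenius norm of a real matrix. -/
noncomputable def frobSq {m n : Type*} [Fintype m] [Fintype n] (M : Matrix m n ℝ) : ℝ :=
  ∑ i, ∑ j, (M i j) ^ 2

section Frobenius

variable {m n : Type*} [Fintype m] [Fintype n]

theorem frobSq_eq_trace (M : Matrix m n ℝ) : frobSq M = (Mᵀ * M).trace := by
  simp only [frobSq, Matrix.trace, Matrix.diag_apply, Matrix.mul_apply, Matrix.transpose_apply, sq]
  exact Finset.sum_comm

theorem frobSq_sub (A B : Matrix m n ℝ) :
    frobSq (A - B) = frobSq A - 2 * (Aᵀ * B).trace + frobSq B := by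
  have hcomm : (Bᵀ * A).trace = (Aᵀ * B).trace := by
    rw [← Matrix.trace_transpose, Matrix.transpose_mul, Matrix.transpose_transpose]
  simp only [frobSq_eq_trace, Matrix.transpose_sub, Matrix.sub_mul, Matrix.mul_sub,
    Matrix.trace_sub, hcomm]
  ring

theorem frobSq_sub_smul_one [DecidableEq n] (A : Matrix n n ℝ) (c : ℝ) :
    frobSq (A - c • (1 : Matrix n n ℝ)) =
      frobSq A - 2 * (c * A.trace) + Fintype.card n * c ^ 2 := by
  rw [frobSq_sub, frobSq_eq_trace (c • (1 : Matrix n n ℝ))]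
  simp only [Matrix.transpose_smul, Matrix.transpose_one, Matrix.mul_smul, Matrix.mul_one,
    Matrix.trace_smul, Matrix.trace_transpose, Matrix.trace_one, smul_eq_mul]
  ring

/-- Conjugation by a matrix with orthonormal columns preserves the trace. -/
theorem trace_conj_of_transpose_mul_self [DecidableEq n] {Φ : Matrix m n ℝ} (hΦ : Φᵀ * Φ = 1)
    (A : Matrix n n ℝ) : (Φ * A * Φᵀ).trace = A.trace := by
  rw [Matrix.trace_mul_comm, ← Matrix.mul_assoc, hΦ, Matrix.one_mul]

theorem conj_mul_conj_of_transpose_mul_self [DecidableEq n] {Φ : Matrix m n ℝ}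
    (hΦ : Φᵀ * Φ = 1) (A B : Matrix n n ℝ) :
    (Φ * A * Φᵀ) * (Φ * B * Φᵀ) = Φ * (A * B) * Φᵀ := by
  calc (Φ * A * Φᵀ) * (Φ * B * Φᵀ) = Φ * A * (Φᵀ * Φ) * B * Φᵀ := by
        simp only [Matrix.mul_assoc]
    _ = Φ * (A * B) * Φᵀ := by rw [hΦ, Matrix.mul_one, Matrix.mul_assoc Φ A B]

theorem frobSq_conj_of_transpose_mul_self [DecidableEq n] {Φ : Matrix m n ℝ}
    (hΦ : Φᵀ * Φ = 1) (A : Matrix n n ℝ) : frobSq (Φ * A * Φᵀ) = frobSq A := by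
  have htranspose : (Φ * A * Φᵀ)ᵀ = Φ * Aᵀ * Φᵀ := by
    simp only [Matrix.transpose_mul, Matrix.transpose_transpose, Matrix.mul_assoc]
  rw [frobSq_eq_trace, frobSq_eq_trace, htranspose, conj_mul_conj_of_transpose_mul_self hΦ,
    trace_conj_of_transpose_mul_self hΦ]

theorem frobSq_diagonal [DecidableEq n] (a : n → ℝ) :
    frobSq (Matrix.diagonal a) = ∑ k, a k ^ 2 := by
  simp [frobSq_eq_trace, Matrix.trace_diagonal, sq]

/-- Frobenius distance from a symmetric `S` to `Φ * (V * diagonal a * Vᵀ) * Φᵀ`, when the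
compression `Φᵀ * S * Φ` is diagonalized by the same `V`. -/
theorem frobSq_sub_conj_diagonal [DecidableEq n] {S : Matrix m m ℝ} (hS : S.IsSymm)
    {Φ : Matrix m n ℝ} (hΦ : Φᵀ * Φ = 1) {V : Matrix n n ℝ} (hV : Vᵀ * V = 1) {d : n → ℝ}
    (hdecomp : Φᵀ * S * Φ = V * Matrix.diagonal d * Vᵀ) (a : n → ℝ) :
    frobSq (S - Φ * (V * Matrix.diagonal a * Vᵀ) * Φᵀ) =
      frobSq S - 2 * ∑ k, d k * a k + ∑ k, a k ^ 2 := by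
  have hcross : (Sᵀ * (Φ * (V * Matrix.diagonal a * Vᵀ) * Φᵀ)).trace = ∑ k, d k * a k := by
    calc (Sᵀ * (Φ * (V * Matrix.diagonal a * Vᵀ) * Φᵀ)).trace
        = ((S * Φ * (V * Matrix.diagonal a * Vᵀ)) * Φᵀ).trace := by
          rw [hS.eq]; simp only [Matrix.mul_assoc]
      _ = ((Φᵀ * S * Φ) * (V * Matrix.diagonal a * Vᵀ)).trace := by
          rw [Matrix.trace_mul_comm]; simp only [Matrix.mul_assoc]
      _ = ∑ k, d k * a k := by
          rw [hdecomp, conj_mul_conj_of_transpose_mul_self hV,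
            trace_conj_of_transpose_mul_self hV, Matrix.diagonal_mul_diagonal,
            Matrix.trace_diagonal]
  rw [frobSq_sub, hcross, frobSq_conj_of_transpose_mul_self hΦ,
    frobSq_conj_of_transpose_mul_self hV, frobSq_diagonal]

end Frobenius

/-- Closed-form expression for the profiled objective `h(Λ̂(σ²), σ²)` in the proof of
Proposition 1:
`(1/2)‖S − ΦΛ̂(σ²)Φᵀ − σ²I‖²_F + γ tr(Λ̂(σ²))
  = (1/2)Σₖ (dₖ² − ((dₖ − σ² − γ)₊)²) + (p/2)σ⁴ − σ² tr(S) + (1/2)‖S − ΦΦᵀSΦΦᵀ‖²_F`. -/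
theorem stmt_4 (p K : ℕ) (hK : 1 ≤ K) (hKp : K ≤ p)
    (S : Matrix (Fin p) (Fin p) ℝ) (hS : S.IsSymm)
    (Φ : Matrix (Fin p) (Fin K) ℝ) (hΦ : Φᵀ * Φ = 1)
    (γ : ℝ) (hγ : 0 ≤ γ) (σ2 : ℝ)
    (d : Fin K → ℝ) (hd : Antitone d)
    (V : Matrix (Fin K) (Fin K) ℝ) (hV : Vᵀ * V = 1)
    (hdecomp : Φᵀ * S * Φ = V * Matrix.diagonal d * Vᵀ)
    (Λhat : Matrix (Fin K) (Fin K) ℝ)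
    (hΛhat : Λhat = V * Matrix.diagonal (fun k => max (d k - σ2 - γ) 0) * Vᵀ) :
    (1 / 2) * frobSq (S - Φ * Λhat * Φᵀ - σ2 • (1 : Matrix (Fin p) (Fin p) ℝ))
        + γ * Λhat.trace =
      (1 / 2) * (∑ k : Fin K, ((d k) ^ 2 - (max (d k - σ2 - γ) 0) ^ 2))
        + ((p : ℝ) / 2) * σ2 ^ 2 - σ2 * S.trace
        + (1 / 2) * frobSq (S - Φ * Φᵀ * S * Φ * Φᵀ) := by
  have hproj : Φ * Φᵀ * S * Φ * Φᵀ = Φ * (V * Matrix.diagonal d * Vᵀ) * Φᵀ := by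
    rw [← hdecomp]; simp only [Matrix.mul_assoc]
  have hpos (k : Fin K) : max (d k - σ2 - γ) 0 * (d k - σ2 - γ) = max (d k - σ2 - γ) 0 ^ 2 := by
    rcases le_total (d k - σ2 - γ) 0 with h | h
    · simp [max_eq_right h]
    · rw [max_eq_left h, sq]
  have hsum : ∑ k, d k * max (d k - σ2 - γ) 0 =
      ∑ k, max (d k - σ2 - γ) 0 ^ 2 + (σ2 + γ) * ∑ k, max (d k - σ2 - γ) 0 := by
    rw [Finset.mul_sum, ← Finset.sum_add_distrib]
    exact Finset.sum_congr rfl fun k _ => by linear_combination hpos k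
  have hsq : ∑ k, d k * d k = ∑ k, d k ^ 2 := by simp only [sq]
  rw [hproj, frobSq_sub_smul_one, hΛhat, frobSq_sub_conj_diagonal hS hΦ hV hdecomp,
    frobSq_sub_conj_diagonal hS hΦ hV hdecomp, Matrix.trace_sub,
    trace_conj_of_transpose_mul_self hΦ, trace_conj_of_transpose_mul_self hV,
    Matrix.trace_diagonal, Finset.sum_sub_distrib, hsum, hsq, Fintype.card_fin]
  ring
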